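/- There exists a constant C > 0, independent of ε and n, such that for every ε ∈ (0,1/2), every n ≥ 1 and every k_{1:n} = (k₁,…,k_n) ∈ (ℤ²₀)^n, one has |P^ε(k_{1:n}) − G(L^ε(|k_{1:n}|²/2))| ≤ C λ_ε², where P^ε(k_{1:n}) := (λ_ε²/π²) Σ_{ℓ,m ∈ ℤ²₀, ℓ+m=k₁} J^ε_{ℓ,m} / (Γ̃ + Γ̃^w G(L^ε(Γ̃))), with Γ̃ := (|ℓ|² + |m|² + Σ_{i=2}^n |k_i|²)/2 and Γ̃^w := ((w·ℓ)² + (w·m)² + Σ_{i=2}^n (w·k_i)²)/2. -/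

import Mathlib

open scoped BigOperators
open scoped Classical

noncomputable section

namespace SBE

/-- Lattice points of `ℤ^d`. -/
abbrev ZLat (d : ℕ) := Fin d → ℤ

/-- Kernels of the `n`-th chaos: functions on `n`-tuples of lattice points. -/
abbrev Chaos (d n : ℕ) := (Fin n → ZLat d) → ℂ

/-- Squared Euclidean norm of a lattice point. -/
def nsq {d : ℕ} (k : ZLat d) : ℝ := ∑ i, ((k i : ℝ))^2

/-- Euclidean norm of a lattice point. -/
def eN {d : ℕ} (k : ZLat d) : ℝ := Real.sqrt (nsq k)

/-- Supremum norm of a lattice point. -/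
def sN {d : ℕ} (k : ZLat d) : ℝ := ((Finset.univ.sup fun i => (k i).natAbs : ℕ) : ℝ)

/-- The norm used in the Fourier cutoff: Euclidean if `d = 2`, supremum otherwise. -/
def cutNorm (d : ℕ) (k : ZLat d) : ℝ := if d = 2 then eN k else sN k

/-- `w · k`. -/
def dotw {d : ℕ} (w : Fin d → ℝ) (k : ZLat d) : ℝ := ∑ i, w i * (k i : ℝ)

/-- `|k_{1:n}|² = Σ_i |k_i|²`. -/
def wSq {d n : ℕ} (k : Fin n → ZLat d) : ℝ := ∑ a, nsq (k a)

/-- The coupling constant `λ_ε`. -/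
def lam (d : ℕ) (ε : ℝ) : ℝ :=
  if d = 2 then (Real.sqrt (Real.log (1 / ε^2)))⁻¹ else ε ^ ((d:ℝ)/2 - 1)

/-- The Fourier cutoff indicator `J^ε_{ℓ,m}`. -/
def Jind (d : ℕ) (ε : ℝ) (l m : ZLat d) : ℝ :=
  if 0 < ε * cutNorm d l ∧ ε * cutNorm d l ≤ 1 ∧
     0 < ε * cutNorm d m ∧ ε * cutNorm d m ≤ 1 ∧
     0 < ε * cutNorm d (l + m) ∧ ε * cutNorm d (l + m) ≤ 1 then 1 else 0

/-- Symmetry of a kernel under permutation of its arguments. -/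
def Symm {d n : ℕ} (f : Chaos d n) : Prop :=
  ∀ (σ : Equiv.Perm (Fin n)) (k : Fin n → ZLat d), f (k ∘ σ) = f k

/-- A kernel vanishes whenever one of its arguments is the zero frequency
(i.e. it is really a function on `(ℤ^d_0)^n`). -/
def SuppOk {d n : ℕ} (f : Chaos d n) : Prop :=
  ∀ k : Fin n → ZLat d, (∃ a, k a = 0) → f k = 0

/-- Summand of `‖(-L₀)^s f‖²`. -/
def sobTerm {d n : ℕ} (s : ℝ) (f : Chaos d n) (k : Fin n → ZLat d) : ℝ :=
  (wSq k / 2) ^ (2*s) * ‖f k‖^2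

/-- `‖(-L₀)^s f‖² = n! Σ_k (|k_{1:n}|²/2)^{2s} |f(k)|²`. -/
def sobSq {d n : ℕ} (s : ℝ) (f : Chaos d n) : ℝ := (n.factorial : ℝ) * ∑' k, sobTerm s f k

/-- Remove the entries `i < j` from an `(n+2)`-tuple (order preservingly). -/
def remove2 {X : Type*} {n : ℕ} (k : Fin (n+2) → X) (i j : Fin (n+2)) (h : i < j) :
    Fin n → X :=
  fun a => k (j.succAbove ((Fin.castLT i
    (Nat.lt_of_lt_of_le (Fin.lt_def.mp h) (Nat.lt_succ_iff.mp j.isLt))).succAbove a))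

/-- The operator `A⁺_ε : ΓL²_{n+1} → ΓL²_{n+2}`. -/
def Aplus (d : ℕ) (w : Fin d → ℝ) (ε : ℝ) {n : ℕ} (f : Chaos d (n+1)) : Chaos d (n+2) :=
  fun k => -(2 * Complex.I / (((2*Real.pi) ^ ((d:ℝ)/2) : ℝ) : ℂ)) *
      ((lam d ε / ((n:ℝ)+2) : ℝ) : ℂ) *
    ∑ i : Fin (n+2), ∑ j : Fin (n+2),
      if h : i < j then
        ((dotw w (k i + k j) : ℝ) : ℂ) * ((Jind d ε (k i) (k j) : ℝ) : ℂ) *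
          f (Fin.cons (k i + k j) (remove2 k i j h))
      else 0

/-- The operator `A⁻_ε : ΓL²_{n+2} → ΓL²_{n+1}`. -/
def Aminus (d : ℕ) (w : Fin d → ℝ) (ε : ℝ) {n : ℕ} (f : Chaos d (n+2)) : Chaos d (n+1) :=
  fun k => (2 * Complex.I / (((2*Real.pi) ^ ((d:ℝ)/2) : ℝ) : ℂ)) *
      ((((n:ℝ)+2) * lam d ε : ℝ) : ℂ) *
    ∑ j : Fin (n+1), ((dotw w (k j) : ℝ) : ℂ) *
      ∑' l : ZLat d, ((Jind d ε l (k j - l) : ℝ) : ℂ) *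
        f (Fin.cons l (Fin.cons (k j - l) (fun a => k (j.succAbove a))))

/-- `L^ε(x) = λ_ε² log(1 + 1/(ε²x))`. -/
def Leps (ε x : ℝ) : ℝ := (lam 2 ε)^2 * Real.log (1 + 1/(ε^2 * x))

/-- `G(x) = c⁻¹ [(3cx/(2π) + 1)^{2/3} − 1]` (with `c = |w|²`). -/
def Gfun (c x : ℝ) : ℝ := c⁻¹ * ((3*c*x/(2*Real.pi) + 1) ^ ((2:ℝ)/3) - 1)

/-- `|w|²`. -/
def wnSq {d : ℕ} (w : Fin d → ℝ) : ℝ := ∑ i, (w i)^2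

/-- `(w·k)²_{1:n} = Σ_i (w·k_i)²`. -/
def wdotSq {d n : ℕ} (w : Fin d → ℝ) (k : Fin n → ZLat d) : ℝ := ∑ a, (dotw w (k a))^2

/-- Fourier multiplier of `S^ε = (−L₀ − L₀^w G^ε)⁻¹`. -/
def sigma' {n : ℕ} (w : Fin 2 → ℝ) (ε : ℝ) (k : Fin n → ZLat 2) : ℝ :=
  2 / (wSq k + wdotSq w k * Gfun (wnSq w) (Leps ε (wSq k / 2)))

/-- The operator `S^ε` acting diagonally on a kernel. -/
def SepsA (w : Fin 2 → ℝ) (ε : ℝ) {n : ℕ} (g : Chaos 2 n) : Chaos 2 n :=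
  fun k => ((sigma' w ε k : ℝ) : ℂ) * g k

/-- `Γ̃ = (|ℓ|² + |k₁−ℓ|² + |k_{2:n}|²)/2`. -/
def GammaT {n : ℕ} (k : Fin (n+1) → ZLat 2) (l : ZLat 2) : ℝ :=
  (nsq l + nsq (k 0 - l) + ∑ a : Fin n, nsq (k a.succ)) / 2

/-- `Γ̃^w = ((w·ℓ)² + (w·(k₁−ℓ))² + Σ_{i≥2}(w·k_i)²)/2`. -/
def GammaTw {n : ℕ} (w : Fin 2 → ℝ) (k : Fin (n+1) → ZLat 2) (l : ZLat 2) : ℝ :=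
  ((dotw w l)^2 + (dotw w (k 0 - l))^2 + ∑ a : Fin n, (dotw w (k a.succ))^2) / 2

/-- `P^ε(k_{1:n}) = (λ_ε²/π²) Σ_{ℓ+m=k₁} J^ε_{ℓ,m} / (Γ̃ + Γ̃^w G(L^ε(Γ̃)))`. -/
def Peps (w : Fin 2 → ℝ) (ε : ℝ) {n : ℕ} (k : Fin (n+1) → ZLat 2) : ℝ :=
  (lam 2 ε)^2 / Real.pi^2 * ∑' l : ZLat 2,
    Jind 2 ε l (k 0 - l) /
      (GammaT k l + GammaTw w k l * Gfun (wnSq w) (Leps ε (GammaT k l)))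

lemma lamsq (ε : ℝ) (h0 : 0 < ε) (h1 : ε < 1/2) :
    (lam 2 ε)^2 = (Real.log (1/ε^2))⁻¹ ∧ 1 ≤ Real.log (1/ε^2) := by
  have hlog : 1 ≤ Real.log (1/ε^2) := by
    rw [Real.le_log_iff_exp_le (by positivity)]
    have := Real.exp_one_lt_d9
    have h2 : (4:ℝ) ≤ 1/ε^2 := by
      rw [le_div_iff₀ (by positivity)]
      nlinarith
    linarith
  refine ⟨?_, hlog⟩
  unfold lam
  rw [if_pos rfl, inv_pow, Real.sq_sqrt (by linarith)]

lemma lamsq_pos (ε : ℝ) (h0 : 0 < ε) (h1 : ε < 1/2) : 0 < (lam 2 ε)^2 := by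
  obtain ⟨h, h'⟩ := lamsq ε h0 h1
  rw [h]; positivity

lemma lamsq_le (ε : ℝ) (h0 : 0 < ε) (h1 : ε < 1/2) : (lam 2 ε)^2 ≤ 1 := by
  obtain ⟨h, h'⟩ := lamsq ε h0 h1
  rw [h]; exact inv_le_one_of_one_le₀ h'

lemma Leps_nonneg (ε x : ℝ) (hx : 0 < x) : 0 ≤ Leps ε x := by
  unfold Leps
  have : 0 ≤ 1/(ε^2*x) := by positivity
  exact mul_nonneg (sq_nonneg _) (Real.log_nonneg (by linarith))

lemma Leps_le (ε x : ℝ) (h0 : 0 < ε) (h1 : ε < 1/2) (hx : 1/4 ≤ x) : Leps ε x ≤ 3 := by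
  obtain ⟨h, h'⟩ := lamsq ε h0 h1
  unfold Leps
  have hx0 : 0 < x := by linarith
  have e1 : Real.log (1+1/(ε^2*x)) ≤ Real.log (1/ε^2) + 2 := by
    have : (2:ℝ) = Real.log (Real.exp 2) := by simp
    rw [this, ← Real.log_mul (by positivity) (by positivity)]
    apply Real.log_le_log (by positivity)
    have e5 : (5:ℝ) ≤ Real.exp 2 := by
      have := Real.exp_one_gt_d9
      have h2 : Real.exp 2 = Real.exp 1 * Real.exp 1 := by rw [← Real.exp_add]; norm_num
      rw [h2]; nlinarith
    have : 1 + 1/(ε^2*x) ≤ 1/ε^2 * 5 := by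
      have a1 : (1:ℝ) ≤ 1/ε^2 := by rw [le_div_iff₀ (by positivity)]; nlinarith
      have a2 : 1/(ε^2*x) ≤ 1/ε^2*4 := by
        rw [div_mul_eq_mul_div, div_le_div_iff₀ (by positivity) (by positivity)]
        nlinarith [sq_pos_of_pos h0]
      linarith
    refine this.trans ?_
    gcongr
  rw [h, inv_mul_le_iff₀ (by linarith)]
  linarith

lemma log_aux (ε x z : ℝ) (h0 : 0 < ε) (hx : 0 < x) (hxz : x ≤ z) :
    |Real.log (1+1/(ε^2*x)) - Real.log (1+1/(ε^2*z))| ≤ (z-x)/x := by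
  have hz : 0 < z := by linarith
  have m : Real.log (1+1/(ε^2*z)) ≤ Real.log (1+1/(ε^2*x)) := by
    apply Real.log_le_log (by positivity)
    gcongr
  rw [abs_of_nonneg (by linarith)]
  have : Real.log (1+1/(ε^2*x)) ≤ Real.log (1+1/(ε^2*z)) + Real.log (z/x) := by
    rw [← Real.log_mul (by positivity) (by positivity)]
    apply Real.log_le_log (by positivity)
    have : (1+1/(ε^2*z)) * (z/x) = z/x + 1/(ε^2*x) := by field_simp
    rw [this]
    have : 1 ≤ z/x := by rw [le_div_iff₀ hx]; linarith
    linarith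
  have h3 := Real.log_le_sub_one_of_pos (show 0 < z/x by positivity)
  have : (z-x)/x = z/x - 1 := by field_simp
  linarith

lemma Leps_lip (ε x z : ℝ) (h0 : 0 < ε) (h1 : ε < 1/2) (hx : 0 < x) (hz : 0 < z) :
    |Leps ε x - Leps ε z| ≤ |x - z| * (1/x+1/z) := by
  have key : |Real.log (1+1/(ε^2*x)) - Real.log (1+1/(ε^2*z))| ≤ |x - z| * (1/x+1/z) := by
    rcases le_total x z with h | h
    · refine (log_aux ε x z h0 hx h).trans ?_
      rw [abs_sub_comm, abs_of_nonneg (by linarith : 0 ≤ z - x), div_eq_mul_one_div]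
      have : 0 < 1/z := by positivity
      exact mul_le_mul_of_nonneg_left (by linarith) (by linarith)
    · rw [abs_sub_comm]
      refine (log_aux ε z x h0 hz h).trans ?_
      rw [abs_of_nonneg (by linarith : 0 ≤ x - z), div_eq_mul_one_div]
      have : 0 < 1/x := by positivity
      exact mul_le_mul_of_nonneg_left (by linarith) (by linarith)
  unfold Leps
  rw [← mul_sub, abs_mul, abs_of_nonneg (sq_nonneg _)]
  calc _ ≤ 1 * _ := mul_le_mul_of_nonneg_right (lamsq_le ε h0 h1) (abs_nonneg _)
    _ ≤ _ := by rw [one_mul]; exact key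

lemma Gfun_nonneg (c x : ℝ) (hc : 0 < c) (hx : 0 ≤ x) : 0 ≤ Gfun c x := by
  unfold Gfun
  have : (1:ℝ) ≤ (3*c*x/(2*Real.pi) + 1) ^ ((2:ℝ)/3) := by
    apply Real.one_le_rpow _ (by norm_num)
    have : 0 ≤ 3*c*x/(2*Real.pi) := by positivity
    linarith
  exact mul_nonneg (by positivity) (by linarith)

lemma Gfun_zero (c : ℝ) : Gfun c 0 = 0 := by simp [Gfun]

/-- derivative of `G` -/
lemma Gfun_deriv (c x : ℝ) (hc : 0 < c) (hx : 0 ≤ x) :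
    HasDerivAt (Gfun c) (1/(Real.pi * Real.sqrt (1 + c * Gfun c x))) x := by
  have hp := Real.pi_pos
  have hb : 0 < 3*c*x/(2*Real.pi) + 1 := by positivity
  have hs : Real.sqrt (1 + c * Gfun c x) = (3*c*x/(2*Real.pi) + 1) ^ ((1:ℝ)/3) := by
    unfold Gfun
    rw [mul_inv_cancel_left₀ hc.ne', add_sub_cancel, Real.sqrt_eq_rpow, ← Real.rpow_mul hb.le]
    norm_num
  have h1 : HasDerivAt (fun x => 3*c*x/(2*Real.pi) + 1) (3*c*1/(2*Real.pi)) x :=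
    (((hasDerivAt_id x).const_mul (3*c)).div_const _).add_const _
  have h2 := ((h1.rpow_const (p := (2:ℝ)/3) (Or.inl hb.ne')).sub_const 1).const_mul c⁻¹
  refine h2.congr_deriv ?_
  rw [hs, show ((2:ℝ)/3 - 1) = -(1/3) by norm_num, Real.rpow_neg hb.le]
  field_simp

lemma Gfun_lip (c x z : ℝ) (hc : 0 < c) (hx : 0 ≤ x) (hz : 0 ≤ z) :
    |Gfun c x - Gfun c z| ≤ |x - z| := by
  have := Convex.norm_image_sub_le_of_norm_hasDerivWithin_le (f := Gfun c) (C := 1)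
    (s := Set.Ici 0) (x := z) (y := x)
    (f' := fun x => 1/(Real.pi * Real.sqrt (1 + c * Gfun c x)))
    (fun x hx => (Gfun_deriv c x hc hx).hasDerivWithinAt)
    (fun x hx => by
      have h1 := Gfun_nonneg c x hc hx
      have h2 : 1 ≤ Real.sqrt (1 + c * Gfun c x) := by
        rw [Real.one_le_sqrt]; nlinarith [mul_nonneg hc.le h1]
      have h3 := Real.pi_gt_three
      rw [Real.norm_of_nonneg (by positivity), div_le_one (by positivity)]
      nlinarith) (convex_Ici 0) hz hx
  simpa using this

lemma Gfun_le (c x : ℝ) (hc : 0 < c) (hx : 0 ≤ x) : Gfun c x ≤ x := by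
  have := Gfun_lip c x 0 hc hx le_rfl
  rw [Gfun_zero, sub_zero, sub_zero, abs_of_nonneg hx] at this
  exact (le_abs_self _).trans this

lemma Leps_deriv (ε x : ℝ) (h0 : 0 < ε) (hx : 0 < x) :
    HasDerivAt (Leps ε) (-(lam 2 ε)^2 / (x * (1 + ε^2*x))) x := by
  have h1 : HasDerivAt (fun x => 1 + 1/(ε^2*x)) (0 + (0 * (ε^2*x) - 1 * (ε^2*1))/(ε^2*x)^2) x :=
    (hasDerivAt_const x (1:ℝ)).add ((hasDerivAt_const x (1:ℝ)).div
      ((hasDerivAt_id x).const_mul (ε^2)) (by positivity))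
  have h2 := (h1.log (by positivity)).const_mul ((lam 2 ε)^2)
  refine h2.congr_deriv ?_
  field_simp
  ring

lemma Leps_tendsto (ε : ℝ) (h0 : 0 < ε) :
    Filter.Tendsto (Leps ε) Filter.atTop (nhds 0) := by
  unfold Leps
  have h1 : Filter.Tendsto (fun x : ℝ => 1 + 1/(ε^2*x)) Filter.atTop (nhds (1+0)) := by
    refine tendsto_const_nhds.add ?_
    refine Filter.Tendsto.div_atTop tendsto_const_nhds ?_
    exact Filter.tendsto_id.const_mul_atTop (by positivity)
  have h2 := (h1.log (by norm_num)).const_mul ((lam 2 ε)^2)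
  simpa using h2

lemma ang_half (p q s : ℝ) (hs : 0 ≤ s) :
    ∫ θ in (-(Real.pi/2))..(Real.pi/2), 1/(1+(p*Real.cos θ+q*Real.sin θ)^2*s)
      = Real.pi / Real.sqrt (1+(p^2+q^2)*s) := by
  have hp := Real.pi_pos
  set Δ := Real.sqrt (1+(p^2+q^2)*s) with hΔ
  have hΔ0 : 0 < Δ := Real.sqrt_pos.mpr (by positivity)
  have hΔ2 : Δ^2 = 1+(p^2+q^2)*s := Real.sq_sqrt (by positivity)
  have hγ : 0 < (1+q^2*s)/Δ := by positivity
  have hcont : Continuous (fun θ : ℝ => 1/(1+(p*Real.cos θ+q*Real.sin θ)^2*s)) := by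
    refine continuous_const.div (by fun_prop) (fun θ => ?_)
    positivity
  have key := intervalIntegral.integral_eq_sub_of_hasDerivAt_of_tendsto
    (a := -(Real.pi/2)) (b := Real.pi/2) (by linarith)
    (f := fun θ => (1/Δ) * Real.arctan ((1+q^2*s)/Δ * Real.tan θ + p*q*s/Δ))
    (f' := fun θ : ℝ => 1/(1+(p*Real.cos θ+q*Real.sin θ)^2*s))
    (fa := (1/Δ) * (-(Real.pi/2))) (fb := (1/Δ) * (Real.pi/2))
    (fun θ hθ => by
      have hc : 0 < Real.cos θ := Real.cos_pos_of_mem_Ioo hθ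
      have h1 := ((((Real.hasDerivAt_tan hc.ne').const_mul ((1+q^2*s)/Δ)).add_const
        (p*q*s/Δ)).arctan).const_mul (1/Δ)
      refine h1.congr_deriv ?_
      rw [Real.tan_eq_sin_div_cos]
      have hsc := Real.sin_sq_add_cos_sq θ
      set C := Real.cos θ
      set S := Real.sin θ
      have e : 1 + ((1+q^2*s)/Δ*(S/C) + p*q*s/Δ)^2 =
          (Δ^2*C^2 + ((1+q^2*s)*S + p*q*s*C)^2)/(Δ^2*C^2) := by
        field_simp
      have e2 : Δ^2*C^2 + ((1+q^2*s)*S + p*q*s*C)^2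
          = (1+q^2*s)*(1+(p*C+q*S)^2*s) := by
        rw [hΔ2]
        linear_combination (1+q^2*s)*hsc
      rw [e, e2]
      have : 0 < 1 + (p*C+q*S)^2*s := by positivity
      field_simp)
    (hcont.intervalIntegrable _ _)
    (by
      refine Filter.Tendsto.const_mul _ ?_
      have h2 := Real.tendsto_tan_neg_pi_div_two
      have h3 := Filter.tendsto_atBot_add_const_right _ (p*q*s/Δ)
        (Filter.Tendsto.const_mul_atBot hγ h2)
      exact (Real.tendsto_arctan_atBot.mono_right nhdsWithin_le_nhds).comp h3)
    (by
      refine Filter.Tendsto.const_mul _ ?_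
      have h2 := Real.tendsto_tan_pi_div_two
      have h3 := Filter.tendsto_atTop_add_const_right _ (p*q*s/Δ)
        (Filter.Tendsto.const_mul_atTop hγ h2)
      exact (Real.tendsto_arctan_atTop.mono_right nhdsWithin_le_nhds).comp h3)
  rw [key]
  field_simp
  ring

lemma ang_full (p q s : ℝ) (hs : 0 ≤ s) :
    ∫ θ in Set.Ioo (-Real.pi) Real.pi, 1/(1+(p*Real.cos θ+q*Real.sin θ)^2*s)
      = 2 * Real.pi / Real.sqrt (1+(p^2+q^2)*s) := by
  have hp := Real.pi_pos
  have hcont : Continuous (fun θ : ℝ => 1/(1+(p*Real.cos θ+q*Real.sin θ)^2*s)) := by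
    refine continuous_const.div (by fun_prop) (fun θ => ?_)
    positivity
  have per : Function.Periodic (fun θ : ℝ => 1/(1+(p*Real.cos θ+q*Real.sin θ)^2*s)) Real.pi := by
    intro θ
    simp only [Real.cos_add_pi, Real.sin_add_pi]
    congr 3
    ring
  rw [← MeasureTheory.integral_Ioc_eq_integral_Ioo,
    ← intervalIntegral.integral_of_le (by linarith)]
  rw [← intervalIntegral.integral_add_adjacent_intervals (b := 0)
    (hcont.intervalIntegrable _ _) (hcont.intervalIntegrable _ _)]
  have h1 := per.intervalIntegral_add_eq (-Real.pi) (-(Real.pi/2))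
  have h2 := per.intervalIntegral_add_eq 0 (-(Real.pi/2))
  have h3 := ang_half p q s hs
  rw [show -Real.pi + Real.pi = 0 by ring, show -(Real.pi/2)+Real.pi = Real.pi/2 by ring] at h1
  rw [show 0 + Real.pi = Real.pi by ring, show -(Real.pi/2)+Real.pi = Real.pi/2 by ring] at h2
  rw [h1, h2, h3]
  ring

/-- radial integrals -/
lemma radial_int (f : ℝ → ℝ) :
    ∫ p : ℝ × ℝ, f (p.1^2+p.2^2) = 2*Real.pi * ∫ r in Set.Ioi (0:ℝ), r * f (r^2) := by
  have hp := Real.pi_pos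
  rw [← integral_comp_polarCoord_symm, polarCoord_target]
  have : ∀ p : ℝ × ℝ, p.1 • f ((polarCoord.symm p).1^2+(polarCoord.symm p).2^2)
      = (p.1 * f (p.1^2)) * (fun _ => (1:ℝ)) p.2 := by
    intro p
    simp only [polarCoord_symm_apply, smul_eq_mul, mul_one]
    congr 2
    linear_combination p.1^2 * Real.sin_sq_add_cos_sq p.2
  simp_rw [this]
  rw [MeasureTheory.Measure.volume_eq_prod,
    MeasureTheory.setIntegral_prod_mul (fun r => r * f (r^2)) (fun _ => (1:ℝ))]
  simp
  rw [max_eq_left (by linarith)]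
  ring

lemma E1_int (a : ℝ) (ha : 0 < a) :
    ∫ p : ℝ × ℝ, Real.sqrt a / ((p.1^2+p.2^2+a) * Real.sqrt (p.1^2+p.2^2+a)) = 2*Real.pi := by
  rw [radial_int (fun y => Real.sqrt a / ((y+a) * Real.sqrt (y+a)))]
  have hsa : 0 < Real.sqrt a := Real.sqrt_pos.mpr ha
  have key := MeasureTheory.integral_Ioi_of_hasDerivAt_of_nonneg' (a := 0) (l := 0)
    (g := fun r => -(Real.sqrt a / Real.sqrt (r^2+a)))
    (g' := fun r => r * (Real.sqrt a / ((r^2+a) * Real.sqrt (r^2+a))))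
    (fun r _ => by
      have hz : 0 < r^2+a := by positivity
      have hs : 0 < Real.sqrt (r^2+a) := Real.sqrt_pos.mpr hz
      have h1 : HasDerivAt (fun r : ℝ => r^2+a) (2*r) r := by
        simpa using (hasDerivAt_pow 2 r).add_const a
      have h2 := ((hasDerivAt_const r (Real.sqrt a)).div (h1.sqrt hz.ne') hs.ne').neg
      refine h2.congr_deriv ?_
      rw [Real.sq_sqrt hz.le]
      field_simp
      ring)
    (fun r hr => by
      have : 0 < r := hr
      positivity)
    (by
      rw [← neg_zero]
      refine Filter.Tendsto.neg (Filter.Tendsto.div_atTop tendsto_const_nhds ?_)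
      refine Real.tendsto_sqrt_atTop.comp ?_
      exact Filter.tendsto_atTop_add_const_right _ _ (Filter.tendsto_pow_atTop (by norm_num)))
  rw [key]
  simp [hsa.ne']

lemma E2_int (ε : ℝ) (h0 : 0 < ε) :
    ∫ p : ℝ × ℝ, ε^2/(1+ε^2*(p.1^2+p.2^2))^2 = Real.pi := by
  rw [radial_int (fun y => ε^2/(1+ε^2*y)^2)]
  have key := MeasureTheory.integral_Ioi_of_hasDerivAt_of_nonneg' (a := 0) (l := 0)
    (g := fun r => -((1/2) / (1+ε^2*r^2)))
    (g' := fun r => r * (ε^2/(1+ε^2*r^2)^2))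
    (fun r _ => by
      have hz : 0 < 1+ε^2*r^2 := by positivity
      have h1 : HasDerivAt (fun r : ℝ => 1+ε^2*r^2) (ε^2*(2*r)) r := by
        simpa using ((hasDerivAt_pow 2 r).const_mul (ε^2)).const_add 1
      have h2 := ((hasDerivAt_const r (1/2:ℝ)).div h1 hz.ne').neg
      refine h2.congr_deriv ?_
      field_simp
      ring)
    (fun r hr => by
      have : 0 < r := hr
      positivity)
    (by
      rw [← neg_zero]
      refine Filter.Tendsto.neg (Filter.Tendsto.div_atTop tendsto_const_nhds ?_)
      refine Filter.tendsto_atTop_add_const_left _ _ ?_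
      exact (Filter.tendsto_pow_atTop (by norm_num)).const_mul_atTop (by positivity))
  rw [key]
  simp
  ring

lemma E1_integrable (a : ℝ) (ha : 0 < a) : MeasureTheory.Integrable (fun p : ℝ × ℝ =>
    Real.sqrt a / ((p.1^2+p.2^2+a) * Real.sqrt (p.1^2+p.2^2+a))) := by
  by_contra h
  have := MeasureTheory.integral_undef h
  rw [E1_int a ha] at this
  have hp := Real.pi_pos
  linarith

lemma E2_integrable (ε : ℝ) (h0 : 0 < ε) : MeasureTheory.Integrable (fun p : ℝ × ℝ =>
    ε^2/(1+ε^2*(p.1^2+p.2^2))^2) := by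
  by_contra h
  have := MeasureTheory.integral_undef h
  rw [E2_int ε h0] at this
  have hp := Real.pi_pos
  linarith

def Hf (w : Fin 2 → ℝ) (ε a : ℝ) (p : ℝ × ℝ) : ℝ :=
  1/((p.1^2+p.2^2+a)*(1+ε^2*(p.1^2+p.2^2+a))*
    (1+(w 0*p.1+w 1*p.2)^2/(p.1^2+p.2^2)*Gfun (wnSq w) (Leps ε (p.1^2+p.2^2+a))))

lemma meas_G (c : ℝ) : Measurable (Gfun c) := by
  unfold Gfun; fun_prop

lemma meas_L (ε : ℝ) : Measurable (Leps ε) := by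
  unfold Leps; fun_prop

lemma meas_Hf (w : Fin 2 → ℝ) (ε a : ℝ) : Measurable (Hf w ε a) := by
  unfold Hf
  have h := (meas_G (wnSq w)).comp (meas_L ε)
  have h2 : Measurable (fun p : ℝ × ℝ => Gfun (wnSq w) (Leps ε (p.1^2+p.2^2+a))) :=
    h.comp (by fun_prop : Measurable (fun p : ℝ × ℝ => p.1^2+p.2^2+a))
  fun_prop

lemma wnSq_eq (w : Fin 2 → ℝ) : wnSq w = w 0^2+w 1^2 := by simp [wnSq]

lemma wnSq_pos (w : Fin 2 → ℝ) (hw : w ≠ 0) : 0 < wnSq w := by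
  rw [wnSq_eq]
  by_contra h
  apply hw
  have h0 : w 0 = 0 := by nlinarith [sq_nonneg (w 0), sq_nonneg (w 1)]
  have h1 : w 1 = 0 := by nlinarith [sq_nonneg (w 0), sq_nonneg (w 1)]
  ext i
  fin_cases i <;> simp [h0, h1]

lemma zdiv (r a : ℝ) : HasDerivAt (fun r : ℝ => r^2+a) (2*r) r := by
  simpa using (hasDerivAt_pow 2 r).add_const a

lemma rho_int (ε a : ℝ) (h0 : 0 < ε) (h1 : ε < 1/2) (ha : 0 < a) :
    MeasureTheory.IntegrableOn (fun r : ℝ => r/((r^2+a)*(1+ε^2*(r^2+a)))) (Set.Ioi 0) := by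
  have hl := lamsq_pos ε h0 h1
  refine MeasureTheory.integrableOn_Ioi_deriv_of_nonneg' (a := 0) (l := -(1/(2*(lam 2 ε)^2)) * 0)
    (g := fun r => -(1/(2*(lam 2 ε)^2)) * Leps ε (r^2+a)) (fun r _ => ?_) (fun r hr => ?_) ?_
  · have hz : 0 < r^2+a := by positivity
    have h2 := ((Leps_deriv ε (r^2+a) h0 hz).comp r (zdiv r a)).const_mul (-(1/(2*(lam 2 ε)^2)))
    refine h2.congr_deriv ?_
    have : 0 < 1 + ε^2*(r^2+a) := by positivity
    have hl' : lam 2 ε ≠ 0 := by intro h; rw [h] at hl; norm_num at hl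
    field_simp
  · have : 0 < r := hr
    positivity
  · refine Filter.Tendsto.const_mul _ ((Leps_tendsto ε h0).comp ?_)
    exact Filter.tendsto_atTop_add_const_right _ _ (Filter.tendsto_pow_atTop (by norm_num))

lemma Hf_int (w : Fin 2 → ℝ) (hw : w ≠ 0) (ε a : ℝ) (h0 : 0 < ε) (h1 : ε < 1/2) (ha : 0 < a) :
    ∫ p : ℝ × ℝ, Hf w ε a p = Real.pi^2 / (lam 2 ε)^2 * Gfun (wnSq w) (Leps ε a) := by
  have hp := Real.pi_pos
  have hc := wnSq_pos w hw
  have hl := lamsq_pos ε h0 h1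
  have hl' : lam 2 ε ≠ 0 := by intro h; rw [h] at hl; norm_num at hl
  have gnn : ∀ r : ℝ, 0 ≤ Gfun (wnSq w) (Leps ε (r^2+a)) := fun r =>
    Gfun_nonneg _ _ hc (Leps_nonneg ε _ (by positivity))
  rw [← integral_comp_polarCoord_symm, polarCoord_target]
  set F : ℝ × ℝ → ℝ := fun p => (p.1/((p.1^2+a)*(1+ε^2*(p.1^2+a)))) *
    (1/(1+(w 0*Real.cos p.2+w 1*Real.sin p.2)^2*Gfun (wnSq w) (Leps ε (p.1^2+a)))) with hF
  have e1 : ∫ p in Set.Ioi (0:ℝ) ×ˢ Set.Ioo (-Real.pi) Real.pi,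
      p.1 • Hf w ε a (polarCoord.symm p) =
      ∫ p in Set.Ioi (0:ℝ) ×ˢ Set.Ioo (-Real.pi) Real.pi, F p := by
    refine MeasureTheory.setIntegral_congr_fun (measurableSet_Ioi.prod measurableSet_Ioo) ?_
    rintro ⟨r, θ⟩ ⟨hr, hθ⟩
    have hr : 0 < r := hr
    simp only [hF, Hf, polarCoord_symm_apply, smul_eq_mul]
    have e : (r*Real.cos θ)^2+(r*Real.sin θ)^2 = r^2 := by
      linear_combination r^2 * Real.sin_sq_add_cos_sq θ
    rw [e]
    have e' : (w 0*(r*Real.cos θ)+w 1*(r*Real.sin θ))^2/r^2 =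
        (w 0*Real.cos θ+w 1*Real.sin θ)^2 := by
      field_simp
    rw [e', ← one_div_mul_one_div, ← mul_assoc]
    congr 1
    ring
  rw [e1]
  have hmeas : Measurable F := by
    have h := (meas_G (wnSq w)).comp (meas_L ε)
    have h2 : Measurable (fun p : ℝ × ℝ => Gfun (wnSq w) (Leps ε (p.1^2+a))) :=
      h.comp (by fun_prop : Measurable (fun p : ℝ × ℝ => p.1^2+a))
    fun_prop
  have hint : MeasureTheory.IntegrableOn F (Set.Ioi (0:ℝ) ×ˢ Set.Ioo (-Real.pi) Real.pi)
      (MeasureTheory.volume.prod MeasureTheory.volume) := by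
    have hr := rho_int ε a h0 h1 ha
    have ht : MeasureTheory.IntegrableOn (fun _ : ℝ => (1:ℝ)) (Set.Ioo (-Real.pi) Real.pi) := by
      simp
    have hm := MeasureTheory.Integrable.mul_prod hr ht
    rw [MeasureTheory.Measure.prod_restrict] at hm
    refine MeasureTheory.Integrable.mono hm hmeas.aestronglyMeasurable ?_
    refine Filter.Eventually.of_forall (fun p => ?_)
    rw [hF, norm_mul, norm_mul]
    gcongr
    have := mul_nonneg (sq_nonneg (w 0*Real.cos p.2+w 1*Real.sin p.2)) (gnn p.1)
    rw [Real.norm_of_nonneg (by positivity), norm_one, div_le_one (by positivity)]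
    linarith
  rw [MeasureTheory.Measure.volume_eq_prod, MeasureTheory.setIntegral_prod F hint]
  have e2 : ∀ r : ℝ, ∫ θ in Set.Ioo (-Real.pi) Real.pi, F (r, θ) =
      (r/((r^2+a)*(1+ε^2*(r^2+a)))) *
        (2*Real.pi/Real.sqrt (1+wnSq w*Gfun (wnSq w) (Leps ε (r^2+a)))) := by
    intro r
    simp only [hF]
    rw [MeasureTheory.integral_const_mul, ang_full _ _ _ (gnn r), wnSq_eq]
  simp_rw [e2]
  have key := MeasureTheory.integral_Ioi_of_hasDerivAt_of_nonneg' (a := 0)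
    (l := -(Real.pi^2/(lam 2 ε)^2) * Gfun (wnSq w) 0)
    (g := fun r => -(Real.pi^2/(lam 2 ε)^2) * Gfun (wnSq w) (Leps ε (r^2+a)))
    (g' := fun r => (r/((r^2+a)*(1+ε^2*(r^2+a)))) *
        (2*Real.pi/Real.sqrt (1+wnSq w*Gfun (wnSq w) (Leps ε (r^2+a)))))
    (fun r _ => by
      have hz : 0 < r^2+a := by positivity
      have h3 := (Leps_deriv ε (r^2+a) h0 hz).comp r (zdiv r a)
      have h4 := ((Gfun_deriv (wnSq w) (Leps ε (r^2+a)) hc (Leps_nonneg ε _ hz)).comp r h3).const_mul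
        (-(Real.pi^2/(lam 2 ε)^2))
      refine h4.congr_deriv ?_
      have : 0 < 1 + ε^2*(r^2+a) := by positivity
      have hs : 0 < Real.sqrt (1+wnSq w*Gfun (wnSq w) (Leps ε (r^2+a))) :=
        Real.sqrt_pos.mpr (by have := mul_nonneg hc.le (gnn r); linarith)
      field_simp)
    (fun r hr => by
      have : 0 < r := hr
      positivity)
    (by
      refine Filter.Tendsto.const_mul _ ?_
      have h5 : Filter.Tendsto (fun r : ℝ => Leps ε (r^2+a)) Filter.atTop (nhds 0) :=
        (Leps_tendsto ε h0).comp (Filter.tendsto_atTop_add_const_right _ _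
          (Filter.tendsto_pow_atTop (by norm_num)))
      exact ((Gfun_deriv (wnSq w) 0 hc le_rfl).continuousAt.tendsto).comp h5)
  rw [key, Gfun_zero]
  simp

lemma Hf_integrable (w : Fin 2 → ℝ) (hw : w ≠ 0) (ε a : ℝ) (h0 : 0 < ε) (h1 : ε < 1/2)
    (ha : 0 < a) : MeasureTheory.Integrable (Hf w ε a) := by
  by_contra h
  have := MeasureTheory.integral_undef h
  rw [Hf_int w hw ε a h0 h1 ha] at this
  have hp := Real.pi_pos
  have hc := wnSq_pos w hw
  have hl := lamsq_pos ε h0 h1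
  have hL : 0 < Leps ε a := by
    unfold Leps
    have : 0 < 1/(ε^2*a) := by positivity
    exact mul_pos hl (Real.log_pos (by linarith))
  have hG : 0 < Gfun (wnSq w) (Leps ε a) := by
    unfold Gfun
    have : (1:ℝ) < (3*wnSq w*Leps ε a/(2*Real.pi) + 1) ^ ((2:ℝ)/3) := by
      apply Real.one_lt_rpow _ (by norm_num)
      have : 0 < 3*wnSq w*Leps ε a/(2*Real.pi) := by positivity
      linarith
    exact mul_pos (by positivity) (by linarith)
  have : 0 < Real.pi^2 / (lam 2 ε)^2 * Gfun (wnSq w) (Leps ε a) := by positivity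
  linarith

lemma core_alg (Γ z Γw q g g' c D C : ℝ) (hΓ : 0 < Γ) (hz : 0 < z) (hzΓ : z ≤ 18*Γ)
    (hΓw : 0 ≤ Γw) (hq : 0 ≤ q) (hqc : q ≤ c) (hg : 0 ≤ g) (hg3 : g ≤ 3) (hg' : 0 ≤ g')
    (hD : 0 ≤ D) (h1 : |Γ - z| ≤ 11*D) (h2 : |Γw - z*q| ≤ 12*c*D) (h3 : z*|g - g'| ≤ 209*D)
    (hC : C = 18*(11+245*c)) :
    |1/(Γ+Γw*g) - 1/(z*(1+q*g'))| ≤ C * (D/z^2) := by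
  have hc : 0 ≤ c := hq.trans hqc
  have p1 : 0 < Γ + Γw*g := by positivity
  have p2 : 0 < z*(1+q*g') := by positivity
  have num : |z*(1+q*g') - (Γ+Γw*g)| ≤ (11+245*c)*D := by
    have : z*(1+q*g') - (Γ+Γw*g) = -(Γ - z) + (-((Γw - z*q)*g)) + (-(q*(z*(g-g')))) := by ring
    rw [this]
    have b1 : |-(Γ - z)| ≤ 11*D := by rw [abs_neg]; exact h1
    have b2 : |-((Γw - z*q)*g)| ≤ 36*c*D := by
      rw [abs_neg, abs_mul, abs_of_nonneg hg]
      calc _ ≤ (12*c*D)*3 := by gcongr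
        _ = _ := by ring
    have b3 : |-(q*(z*(g-g')))| ≤ 209*c*D := by
      rw [abs_neg, abs_mul, abs_mul, abs_of_nonneg hq, abs_of_nonneg hz.le]
      calc _ ≤ c*(209*D) := by gcongr
        _ = _ := by ring
    have := abs_add_three (-(Γ - z)) (-((Γw - z*q)*g)) (-(q*(z*(g-g'))))
    linarith
  rw [div_sub_div _ _ p1.ne' p2.ne', abs_div, abs_of_pos (mul_pos p1 p2), one_mul, mul_one, hC,
    ← mul_div_assoc, div_le_div_iff₀ (by positivity) (by positivity)]
  have den : z^2 ≤ 18*((Γ+Γw*g)*(z*(1+q*g'))) := by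
    have a1 : Γ ≤ Γ+Γw*g := by have := mul_nonneg hΓw hg; linarith
    have a2 : z ≤ z*(1+q*g') := by nlinarith [mul_nonneg hq hg', mul_nonneg hz.le (mul_nonneg hq hg')]
    calc z^2 = z*z := by ring
      _ ≤ 18*Γ*z := by gcongr
      _ ≤ 18*(Γ+Γw*g)*(z*(1+q*g')) := by gcongr
      _ = _ := by ring
  calc |z*(1+q*g') - (Γ+Γw*g)| * z^2 ≤ ((11+245*c)*D) * (18*((Γ+Γw*g)*(z*(1+q*g')))) := by gcongr
    _ = _ := by ring

lemma cs2 (w : Fin 2 → ℝ) (x1 x2 : ℝ) : (w 0*x1+w 1*x2)^2 ≤ wnSq w*(x1^2+x2^2) := by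
  rw [wnSq_eq]; nlinarith [sq_nonneg (w 0*x2-w 1*x1)]

lemma q_le (w : Fin 2 → ℝ) (x1 x2 : ℝ) : (w 0*x1+w 1*x2)^2/(x1^2+x2^2) ≤ wnSq w := by
  have h := cs2 w x1 x2
  have hc : 0 ≤ wnSq w := by rw [wnSq_eq]; positivity
  exact div_le_of_le_mul₀ (by positivity) hc h

lemma ydiff (x1 x2 d1 d2 a : ℝ) (h1 : 0 ≤ d1) (h1' : d1 ≤ 1) (h2 : 0 ≤ d2) (h2' : d2 ≤ 1)
    (ha : 1/2 ≤ a) :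
    |((x1-d1)^2+(x2-d2)^2) - (x1^2+x2^2)| ≤ 10*(Real.sqrt a*Real.sqrt (x1^2+x2^2+a)) ∧
    1 ≤ 2*(Real.sqrt a*Real.sqrt (x1^2+x2^2+a)) ∧ a ≤ Real.sqrt a*Real.sqrt (x1^2+x2^2+a) ∧
    |x1| ≤ 3/2*(Real.sqrt a*Real.sqrt (x1^2+x2^2+a)) ∧
    |x2| ≤ 3/2*(Real.sqrt a*Real.sqrt (x1^2+x2^2+a)) := by
  set s := Real.sqrt (x1^2+x2^2+a) with hs
  set t := Real.sqrt a with ht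
  have ht2 : t^2 = a := Real.sq_sqrt (by linarith)
  have ht0 : 0 ≤ t := Real.sqrt_nonneg _
  have ht1 : 2/3 ≤ t := by nlinarith
  have hst : t ≤ s := Real.sqrt_le_sqrt (by nlinarith [sq_nonneg x1, sq_nonneg x2])
  have hx1 : |x1| ≤ s := Real.abs_le_sqrt (by nlinarith [sq_nonneg x2])
  have hx2 : |x2| ≤ s := Real.abs_le_sqrt (by nlinarith [sq_nonneg x1])
  have haD : a ≤ t*s := by nlinarith
  have hsD : s ≤ 3/2*(t*s) := by nlinarith
  refine ⟨?_, by linarith, haD, by linarith, by linarith⟩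
  have f1 : |d1*(d1-2*x1)| ≤ 1+2*s := by
    rw [abs_mul, abs_of_nonneg h1]
    have := abs_sub d1 (2*x1)
    rw [abs_of_nonneg h1, abs_mul, abs_two] at this
    have := abs_nonneg (d1-2*x1)
    nlinarith
  have f2 : |d2*(d2-2*x2)| ≤ 1+2*s := by
    rw [abs_mul, abs_of_nonneg h2]
    have := abs_sub d2 (2*x2)
    rw [abs_of_nonneg h2, abs_mul, abs_two] at this
    have := abs_nonneg (d2-2*x2)
    nlinarith
  have e : ((x1-d1)^2+(x2-d2)^2) - (x1^2+x2^2) = d1*(d1-2*x1) + d2*(d2-2*x2) := by ring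
  rw [e]
  have := abs_add_le (d1*(d1-2*x1)) (d2*(d2-2*x2))
  linarith

lemma wdiff (w : Fin 2 → ℝ) (x1 x2 d1 d2 D : ℝ) (h1 : 0 ≤ d1) (h1' : d1 ≤ 1) (h2 : 0 ≤ d2)
    (h2' : d2 ≤ 1) (hD : 1 ≤ 2*D) (hx1 : |x1| ≤ 3/2*D) (hx2 : |x2| ≤ 3/2*D) :
    |(w 0*(x1-d1)+w 1*(x2-d2))^2 - (w 0*x1+w 1*x2)^2| ≤ 10*wnSq w*D := by
  have e : (w 0*(x1-d1)+w 1*(x2-d2))^2 - (w 0*x1+w 1*x2)^2 =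
    -((w 0*d1+w 1*d2)*(w 0*(2*x1-d1)+w 1*(2*x2-d2))) := by ring
  rw [e, abs_neg, abs_mul]
  set W := |w 0|+|w 1|
  have hW : W^2 ≤ 2*wnSq w := by
    rw [wnSq_eq, ← sq_abs (w 0), ← sq_abs (w 1)]
    nlinarith [sq_nonneg (|w 0|-|w 1|)]
  have p0 := abs_nonneg (w 0)
  have p1 := abs_nonneg (w 1)
  have f1 : |w 0*d1+w 1*d2| ≤ W := by
    have := abs_add_le (w 0*d1) (w 1*d2)
    rw [abs_mul, abs_mul, abs_of_nonneg h1, abs_of_nonneg h2] at this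
    nlinarith
  have g1 : |2*x1-d1| ≤ 5*D := by
    have := abs_sub (2*x1) d1
    rw [abs_of_nonneg h1, abs_mul, abs_two] at this
    linarith
  have g2 : |2*x2-d2| ≤ 5*D := by
    have := abs_sub (2*x2) d2
    rw [abs_of_nonneg h2, abs_mul, abs_two] at this
    linarith
  have f2 : |w 0*(2*x1-d1)+w 1*(2*x2-d2)| ≤ W*(5*D) := by
    have := abs_add_le (w 0*(2*x1-d1)) (w 1*(2*x2-d2))
    rw [abs_mul, abs_mul] at this
    nlinarith
  calc _ ≤ W*(W*(5*D)) := by gcongr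
    _ = W^2*(5*D) := by ring
    _ ≤ (2*wnSq w)*(5*D) := by gcongr; linarith
    _ = _ := by ring

lemma core (w : Fin 2 → ℝ) (hw : w ≠ 0) (ε x1 x2 d1 d2 a e f : ℝ) (h0 : 0 < ε) (hε : ε < 1/2)
    (h1 : 0 ≤ d1) (h1' : d1 ≤ 1) (h2 : 0 ≤ d2) (h2' : d2 ≤ 1) (ha : 1/2 ≤ a)
    (he : a/2 ≤ e) (he' : e ≤ a) (hf : 0 ≤ f) (hf' : f ≤ wnSq w*a) :
    |1/(((x1-d1)^2+(x2-d2)^2+e) + ((w 0*(x1-d1)+w 1*(x2-d2))^2+f)*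
        Gfun (wnSq w) (Leps ε ((x1-d1)^2+(x2-d2)^2+e)))
      - 1/((x1^2+x2^2+a)*(1+(w 0*x1+w 1*x2)^2/(x1^2+x2^2)*Gfun (wnSq w) (Leps ε (x1^2+x2^2+a))))|
    ≤ 18*(11+245*wnSq w) * (Real.sqrt a/((x1^2+x2^2+a)*Real.sqrt (x1^2+x2^2+a))) := by
  have hc := wnSq_pos w hw
  obtain ⟨y1, y2, y3, y4, y5⟩ := ydiff x1 x2 d1 d2 a h1 h1' h2 h2' ha
  have y6 := wdiff w x1 x2 d1 d2 _ h1 h1' h2 h2' y2 y4 y5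
  have q1 := q_le w x1 x2
  have q0 : 0 ≤ (w 0*x1+w 1*x2)^2/(x1^2+x2^2) := by positivity
  have yy : (x1^2+x2^2) * ((w 0*x1+w 1*x2)^2/(x1^2+x2^2)) = (w 0*x1+w 1*x2)^2 := by
    by_cases h : x1^2+x2^2 = 0
    · have := cs2 w x1 x2
      rw [h] at this ⊢
      nlinarith [sq_nonneg (w 0*x1+w 1*x2)]
    · field_simp
  set q := (w 0*x1+w 1*x2)^2/(x1^2+x2^2) with hq
  have hy' : x1^2+x2^2 ≤ 2*((x1-d1)^2+(x2-d2)^2)+4 := by nlinarith [sq_nonneg (x1-2*d1), sq_nonneg (x2-2*d2)]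
  set y' := (x1-d1)^2+(x2-d2)^2 with hy'd
  have hy'0 : 0 ≤ y' := by positivity
  set z := x1^2+x2^2+a with hz
  set y := x1^2+x2^2 with hy
  have hy0 : 0 ≤ y := by positivity
  have hz0 : 0 < z := by linarith
  set s := Real.sqrt z with hs
  set t := Real.sqrt a with ht
  have hss : s^2 = z := Real.sq_sqrt hz0.le
  have hs0 : 0 < s := Real.sqrt_pos.mpr hz0
  have ht0 : 0 ≤ t := Real.sqrt_nonneg _
  have hΓ : 0 < y'+e := by linarith
  have hzΓ : z ≤ 18*(y'+e) := by linarith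
  have hd : |y'+e - z| ≤ 11*(t*s) := by
    have : y'+e-z = (y'-y) + (e - a) := by rw [hz]; ring
    rw [this]
    have h3 := abs_add_le (y'-y) (e-a)
    have h4 : |e-a| ≤ t*s := by rw [abs_le]; constructor <;> linarith
    linarith
  have res := core_alg (y'+e) z ((w 0*(x1-d1)+w 1*(x2-d2))^2+f) q
    (Gfun (wnSq w) (Leps ε (y'+e))) (Gfun (wnSq w) (Leps ε z)) (wnSq w) (t*s) _
    hΓ hz0 hzΓ (by positivity) q0 q1
    (Gfun_nonneg _ _ hc (Leps_nonneg _ _ hΓ))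
    ((Gfun_le _ _ hc (Leps_nonneg _ _ hΓ)).trans (Leps_le _ _ h0 hε (by linarith)))
    (Gfun_nonneg _ _ hc (Leps_nonneg _ _ hz0))
    (by positivity) hd
    (by
      have : (w 0*(x1-d1)+w 1*(x2-d2))^2+f - z*q =
        ((w 0*(x1-d1)+w 1*(x2-d2))^2 - (w 0*x1+w 1*x2)^2) + (f - a*q) := by
        rw [hz, ← yy]; ring
      rw [this]
      have h3 := abs_add_le ((w 0*(x1-d1)+w 1*(x2-d2))^2 - (w 0*x1+w 1*x2)^2) (f - a*q)
      have aq : a*q ≤ a*wnSq w := by gcongr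
      have aq0 : 0 ≤ a*q := mul_nonneg (by linarith) q0
      have ac : wnSq w*a ≤ wnSq w*(t*s) := by gcongr
      have h4 : |f - a*q| ≤ 2*wnSq w*(t*s) := by
        have x0 : 0 ≤ wnSq w*(t*s) := by positivity
        rw [abs_le]; constructor <;> linarith
      linarith)
    (by
      have l1 := Gfun_lip (wnSq w) _ _ hc (Leps_nonneg ε _ hΓ) (Leps_nonneg ε _ hz0)
      have l2 := Leps_lip ε _ _ h0 hε hΓ hz0
      have l3 : z*(1/(y'+e)+1/z) ≤ 19 := by
        have : z*(1/(y'+e)+1/z) = z/(y'+e)+1 := by field_simp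
        rw [this]
        have : z/(y'+e) ≤ 18 := by rw [div_le_iff₀ hΓ]; exact hzΓ
        linarith
      calc _ ≤ z*(|y'+e-z| * (1/(y'+e)+1/z)) := by gcongr; exact l1.trans l2
        _ = |y'+e-z| * (z*(1/(y'+e)+1/z)) := by ring
        _ ≤ (11*(t*s))*19 := by gcongr
        _ = _ := by ring) rfl
  have eq : t*s/z^2 = t/(z*s) := by
    rw [← hss]; field_simp
  rw [← eq]
  exact res

def phi (w : Fin 2 → ℝ) (ε : ℝ) {n : ℕ} (k : Fin (n+1) → ZLat 2) (l : ZLat 2) : ℝ :=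
  Jind 2 ε l (k 0 - l) /
      (GammaT k l + GammaTw w k l * Gfun (wnSq w) (Leps ε (GammaT k l)))

lemma nsq2 (k : ZLat 2) : nsq k = (k 0:ℝ)^2+(k 1:ℝ)^2 := by simp [nsq]

lemma nsq_nonneg (k : ZLat 2) : 0 ≤ nsq k := by rw [nsq2]; positivity

lemma nsq_ge (k : ZLat 2) (hk : k ≠ 0) : 1 ≤ nsq k := by
  have : (1:ℤ) ≤ (k 0)^2+(k 1)^2 := by
    by_contra h
    apply hk
    have h0 : k 0 = 0 := by
      have : (k 0)^2 = 0 := by nlinarith [sq_nonneg (k 0), sq_nonneg (k 1)]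
      exact pow_eq_zero_iff (two_ne_zero) |>.mp this
    have h1 : k 1 = 0 := by
      have : (k 1)^2 = 0 := by nlinarith [sq_nonneg (k 0), sq_nonneg (k 1)]
      exact pow_eq_zero_iff (two_ne_zero) |>.mp this
    ext i
    fin_cases i <;> simp [h0, h1]
  rw [nsq2]
  exact_mod_cast this

lemma dotw2 (w : Fin 2 → ℝ) (k : ZLat 2) : dotw w k = w 0*k 0+w 1*k 1 := by simp [dotw]

lemma cut_pos (ε : ℝ) (h0 : 0 < ε) (k : ZLat 2) (hk : k ≠ 0) : 0 < ε * cutNorm 2 k := by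
  unfold cutNorm eN
  rw [if_pos rfl]
  have := nsq_ge k hk
  exact mul_pos h0 (Real.sqrt_pos.mpr (by linarith))

lemma cut_le (ε : ℝ) (h0 : 0 < ε) (k : ZLat 2) : ε * cutNorm 2 k ≤ 1 ↔ ε^2*nsq k ≤ 1 := by
  unfold cutNorm eN
  rw [if_pos rfl]
  have h := Real.sq_sqrt (nsq_nonneg k)
  have h' := Real.sqrt_nonneg (nsq k)
  have : ε^2*nsq k = (ε*Real.sqrt (nsq k))^2 := by rw [mul_pow, h]
  rw [this, sq_le_one_iff₀ (by positivity)]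

lemma Jind_cases (ε : ℝ) (h0 : 0 < ε) (l K : ZLat 2) (hK : K ≠ 0) :
    (Jind 2 ε l (K-l) = 1 ∧ ε^2*nsq l ≤ 1 ∧ ε^2*nsq (K-l) ≤ 1) ∨
    (Jind 2 ε l (K-l) = 0 ∧ (l = 0 ∨ l = K ∨ 1 < ε^2*nsq l ∨ 1 < ε^2*nsq (K-l) ∨ 1 < ε^2*nsq K)) := by
  unfold Jind
  rw [add_sub_cancel]
  simp only [cut_le ε h0]
  split_ifs with h
  · exact Or.inl ⟨rfl, h.2.1, h.2.2.2.1⟩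
  · right
    refine ⟨rfl, ?_⟩
    by_contra hh
    push Not at hh
    obtain ⟨a1, a2, a3, a4, a5⟩ := hh
    exact h ⟨cut_pos ε h0 l a1, a3, cut_pos ε h0 _ (sub_ne_zero.mpr (Ne.symm a2)), a4,
      cut_pos ε h0 K hK, a5⟩

lemma Hf_le (w : Fin 2 → ℝ) (hw : w ≠ 0) (ε a : ℝ) (ha : 0 < a) (p : ℝ × ℝ) :
    0 ≤ Hf w ε a p ∧
    Hf w ε a p ≤ 1/((p.1^2+p.2^2+a)*(1+ε^2*(p.1^2+p.2^2+a))) := by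
  have hc := wnSq_pos w hw
  unfold Hf
  have hz : 0 < p.1^2+p.2^2+a := by positivity
  have hg := Gfun_nonneg _ _ hc (Leps_nonneg ε _ hz)
  have hq : 0 ≤ (w 0*p.1+w 1*p.2)^2/(p.1^2+p.2^2) := by positivity
  have := mul_nonneg hq hg
  refine ⟨by positivity, ?_⟩
  apply one_div_le_one_div_of_le (by positivity)
  exact le_mul_of_one_le_right (by positivity) (by linarith)

lemma Hf_diff (w : Fin 2 → ℝ) (hw : w ≠ 0) (ε a : ℝ) (ha : 0 < a) (p : ℝ × ℝ) :
    |1/((p.1^2+p.2^2+a)*(1+(w 0*p.1+w 1*p.2)^2/(p.1^2+p.2^2)*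
      Gfun (wnSq w) (Leps ε (p.1^2+p.2^2+a)))) - Hf w ε a p| ≤ ε^2 := by
  have hc := wnSq_pos w hw
  unfold Hf
  have hz : 0 < p.1^2+p.2^2+a := by positivity
  have hg := Gfun_nonneg _ _ hc (Leps_nonneg ε _ hz)
  have hq : 0 ≤ (w 0*p.1+w 1*p.2)^2/(p.1^2+p.2^2) := by positivity
  have h := mul_nonneg hq hg
  set X := (w 0*p.1+w 1*p.2)^2/(p.1^2+p.2^2)*Gfun (wnSq w) (Leps ε (p.1^2+p.2^2+a))
  set z := p.1^2+p.2^2+a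
  have h1 : 0 < 1+ε^2*z := by positivity
  have h2 : 0 < 1+X := by positivity
  have : 1/(z*(1+X)) - 1/(z*(1+ε^2*z)*(1+X)) = ε^2 * (1/((1+ε^2*z)*(1+X))) := by
    field_simp
    ring
  rw [this, abs_of_nonneg (by positivity)]
  apply mul_le_of_le_one_right (by positivity)
  rw [div_le_one (by positivity)]
  have e1 : 1 ≤ 1+ε^2*z := by have : 0 ≤ ε^2*z := by positivity
                              linarith
  nlinarith

lemma tailE2 (ε a y : ℝ) (h0 : 0 < ε) (ha : 0 < a) (hy : 0 ≤ y) (h : 1 ≤ 17*(ε^2*(y+a))) :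
    1/((y+a)*(1+ε^2*(y+a))) ≤ 18*(ε^2/(1+ε^2*y)^2) := by
  rw [← mul_div_assoc, div_le_div_iff₀ (by positivity) (by positivity)]
  set X := ε^2*(y+a) with hX
  have h1 : 1+ε^2*y ≤ 1+X := by rw [hX]; gcongr; linarith
  have h2 : (1+ε^2*y)^2 ≤ (1+X)^2 := by gcongr
  calc 1*(1+ε^2*y)^2 ≤ (1+X)*(1+X) := by linarith
    _ ≤ (18*X)*(1+X) := by
      have : 0 < X := by positivity
      gcongr; linarith
    _ = _ := by rw [hX]; ring

lemma nearE1 (ε a y : ℝ) (ha : 0 < a) (hy : 0 ≤ y) (h : y + a ≤ 16*a) :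
    1/((y+a)*(1+ε^2*(y+a))) ≤ 4*(Real.sqrt a/((y+a)*Real.sqrt (y+a))) := by
  have hz : 0 < y+a := by positivity
  have h1 : Real.sqrt (y+a) ≤ 4*Real.sqrt a := by
    have : Real.sqrt (16*a) = 4*Real.sqrt a := by
      rw [Real.sqrt_mul (by norm_num), show (16:ℝ) = 4^2 by norm_num, Real.sqrt_sq (by norm_num)]
    rw [← this]; exact Real.sqrt_le_sqrt h
  have hs : 0 < Real.sqrt (y+a) := Real.sqrt_pos.mpr hz
  calc 1/((y+a)*(1+ε^2*(y+a))) ≤ 1/(y+a) := by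
        apply one_div_le_one_div_of_le hz
        exact le_mul_of_one_le_right hz.le (by have : 0 ≤ ε^2*(y+a) := by positivity
                                               linarith)
    _ ≤ _ := by
        rw [← mul_div_assoc, div_le_div_iff₀ hz (by positivity)]
        nlinarith

set_option maxHeartbeats 1000000 in
lemma pointwise (w : Fin 2 → ℝ) (hw : w ≠ 0) (ε : ℝ) (h0 : 0 < ε) (hε : ε < 1/2) {n : ℕ}
    (k : Fin (n+1) → ZLat 2) (hk : ∀ i, k i ≠ 0) (l : ZLat 2) (x1 x2 d1 d2 a : ℝ)
    (hd1 : 0 ≤ d1) (hd1' : d1 ≤ 1) (hd2 : 0 ≤ d2) (hd2' : d2 ≤ 1)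
    (e1 : (l 0:ℝ) = x1 - d1 + (k 0 0:ℝ)/2) (e2 : (l 1:ℝ) = x2 - d2 + (k 0 1:ℝ)/2)
    (hadef : a = wSq k/2) :
    |phi w ε k l - Hf w ε a (x1,x2)| ≤
      18*(12+245*wnSq w) * (Real.sqrt a/((x1^2+x2^2+a)*Real.sqrt (x1^2+x2^2+a)))
       + 18*(ε^2/(1+ε^2*(x1^2+x2^2))^2) := by
  have hyy : x1^2+x2^2 ≤ 2*((x1-d1)^2+(x2-d2)^2)+4 := by
    nlinarith [sq_nonneg (x1-2*d1), sq_nonneg (x2-2*d2)]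
  have hyy' : (x1-d1)^2+(x2-d2)^2 ≤ 2*(x1^2+x2^2)+4 := by
    nlinarith [sq_nonneg (x1+d1), sq_nonneg (x2+d2)]
  have hε2 : ε^2 ≤ 1/4 := by nlinarith
  have hc := wnSq_pos w hw
  have hK := nsq_ge _ (hk 0)
  rw [nsq2] at hK
  set A := ∑ i : Fin n, nsq (k i.succ) with hA
  set B := ∑ i : Fin n, (dotw w (k i.succ))^2 with hB
  have hA0 : 0 ≤ A := Finset.sum_nonneg (fun i _ => nsq_nonneg _)
  have hB0 : 0 ≤ B := Finset.sum_nonneg (fun i _ => sq_nonneg _)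
  have hBA : B ≤ wnSq w*A := by
    rw [hA, hB, Finset.mul_sum]
    refine Finset.sum_le_sum (fun i _ => ?_)
    rw [dotw2, nsq2]; exact cs2 w _ _
  have ha2 : a = ((k 0 0:ℝ)^2+(k 0 1:ℝ)^2+A)/2 := by
    rw [hadef, wSq, Fin.sum_univ_succ, nsq2]
  have ha : 1/2 ≤ a := by linarith
  have hnl : nsq l = (x1 - d1 + (k 0 0:ℝ)/2)^2+(x2 - d2 + (k 0 1:ℝ)/2)^2 := by
    rw [nsq2, e1, e2]
  have hnkl : nsq (k 0 - l) = (x1 - d1 - (k 0 0:ℝ)/2)^2+(x2 - d2 - (k 0 1:ℝ)/2)^2 := by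
    rw [nsq2]; simp only [Pi.sub_apply, Int.cast_sub]; rw [e1, e2]; ring
  have hG : GammaT k l = (x1-d1)^2+(x2-d2)^2+(((k 0 0:ℝ)^2+(k 0 1:ℝ)^2)/4+A/2) := by
    rw [GammaT, hnl, hnkl, ← hA]; ring
  have hGw : GammaTw w k l = (w 0*(x1-d1)+w 1*(x2-d2))^2+
      ((w 0*(k 0 0:ℝ)+w 1*(k 0 1:ℝ))^2/4+B/2) := by
    rw [GammaTw, ← hB, dotw2, dotw2]
    simp only [Pi.sub_apply, Int.cast_sub]; rw [e1, e2]; ring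
  have hy0 : 0 ≤ x1^2+x2^2 := by positivity
  have hE1 : 0 ≤ Real.sqrt a/((x1^2+x2^2+a)*Real.sqrt (x1^2+x2^2+a)) := by positivity
  have hE2 : 0 ≤ ε^2/(1+ε^2*(x1^2+x2^2))^2 := by positivity
  have cE1 : 0 ≤ wnSq w*(Real.sqrt a/((x1^2+x2^2+a)*Real.sqrt (x1^2+x2^2+a))) := by positivity
  have hε2' : 0 < ε^2 := by positivity
  rcases Jind_cases ε h0 l (k 0) (hk 0) with ⟨hJ, j1, j2⟩ | ⟨hJ, hJ'⟩
  · have hphi : phi w ε k l = 1/(GammaT k l + GammaTw w k l * Gfun (wnSq w) (Leps ε (GammaT k l))) := by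
      rw [phi, hJ]
    have c1 := core w hw ε x1 x2 d1 d2 a (((k 0 0:ℝ)^2+(k 0 1:ℝ)^2)/4+A/2)
      ((w 0*(k 0 0:ℝ)+w 1*(k 0 1:ℝ))^2/4+B/2) h0 hε hd1 hd1' hd2 hd2' ha
      (by linarith) (by linarith) (by positivity)
      (by
        have := cs2 w (k 0 0:ℝ) (k 0 1:ℝ)
        have h3 : 0 ≤ wnSq w * ((k 0 0:ℝ)^2+(k 0 1:ℝ)^2) := by positivity
        rw [ha2]
        linarith)
    rw [← hG, ← hGw, ← hphi] at c1
    have c2 := Hf_diff w hw ε a (by linarith) (x1,x2)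
    simp only at c2
    have hy3 : ε^2*(x1^2+x2^2) ≤ 3 := by
      rw [hnl] at j1
      rw [hnkl] at j2
      have : ε^2*((x1-d1)^2+(x2-d2)^2) ≤ 1 := by
        have t1 := mul_nonneg hε2'.le (sq_nonneg ((k 0 0:ℝ)/2))
        have t2 := mul_nonneg hε2'.le (sq_nonneg ((k 0 1:ℝ)/2))
        linarith
      calc _ ≤ ε^2*(2*((x1-d1)^2+(x2-d2)^2)+4) := by gcongr
        _ ≤ 3 := by linarith
    have c3 : ε^2 ≤ 16*(ε^2/(1+ε^2*(x1^2+x2^2))^2) := by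
      rw [← mul_div_assoc, le_div_iff₀ (by positivity), mul_comm 16]
      have : 0 ≤ ε^2*(x1^2+x2^2) := by positivity
      refine mul_le_mul_of_nonneg_left ?_ hε2'.le
      calc (1+ε^2*(x1^2+x2^2))^2 ≤ (1+3)^2 := by gcongr
        _ = 16 := by norm_num
    have c4 := abs_sub_le (phi w ε k l) (1/((x1^2+x2^2+a)*(1+(w 0*x1+w 1*x2)^2/(x1^2+x2^2)*
      Gfun (wnSq w) (Leps ε (x1^2+x2^2+a))))) (Hf w ε a (x1,x2))
    linarith
  · have hphi : phi w ε k l = 0 := by rw [phi, hJ, zero_div]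
    obtain ⟨b1, b2⟩ := Hf_le w hw ε a (by linarith) (x1,x2)
    simp only at b2
    rw [hphi, zero_sub, abs_neg, abs_of_nonneg b1]
    refine b2.trans ?_
    have near : nsq l = 0 ∨ nsq (k 0 - l) = 0 →
        1/((x1^2+x2^2+a)*(1+ε^2*(x1^2+x2^2+a))) ≤
        4*(Real.sqrt a/((x1^2+x2^2+a)*Real.sqrt (x1^2+x2^2+a))) := by
      intro h
      apply nearE1 ε a _ (by linarith) hy0
      have : (x1-d1)^2+(x2-d2)^2 = ((k 0 0:ℝ)^2+(k 0 1:ℝ)^2)/4 := by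
        rcases h with h | h
        · rw [hnl] at h
          have u1 : x1 - d1 + (k 0 0:ℝ)/2 = 0 := by
            apply pow_eq_zero_iff two_ne_zero |>.mp
            apply le_antisymm _ (sq_nonneg _)
            linarith [sq_nonneg (x1 - d1 + (k 0 0:ℝ)/2), sq_nonneg (x2 - d2 + (k 0 1:ℝ)/2)]
          have u2 : x2 - d2 + (k 0 1:ℝ)/2 = 0 := by
            apply pow_eq_zero_iff two_ne_zero |>.mp
            apply le_antisymm _ (sq_nonneg _)
            linarith [sq_nonneg (x1 - d1 + (k 0 0:ℝ)/2), sq_nonneg (x2 - d2 + (k 0 1:ℝ)/2)]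
          rw [eq_neg_of_add_eq_zero_left u1, eq_neg_of_add_eq_zero_left u2]; ring
        · rw [hnkl] at h
          have u1 : x1 - d1 - (k 0 0:ℝ)/2 = 0 := by
            apply pow_eq_zero_iff two_ne_zero |>.mp
            apply le_antisymm _ (sq_nonneg _)
            linarith [sq_nonneg (x1 - d1 - (k 0 0:ℝ)/2), sq_nonneg (x2 - d2 - (k 0 1:ℝ)/2)]
          have u2 : x2 - d2 - (k 0 1:ℝ)/2 = 0 := by
            apply pow_eq_zero_iff two_ne_zero |>.mp
            apply le_antisymm _ (sq_nonneg _)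
            linarith [sq_nonneg (x1 - d1 - (k 0 0:ℝ)/2), sq_nonneg (x2 - d2 - (k 0 1:ℝ)/2)]
          rw [sub_eq_zero.mp u1, sub_eq_zero.mp u2]; ring
      linarith
    have far : (∃ m, 1 < ε^2*m ∧ m ≤ 17*(x1^2+x2^2+a)) →
        1/((x1^2+x2^2+a)*(1+ε^2*(x1^2+x2^2+a))) ≤ 18*(ε^2/(1+ε^2*(x1^2+x2^2))^2) := by
      rintro ⟨m, m1, m2⟩
      apply tailE2 ε a _ h0 (by linarith) hy0
      have : ε^2*m ≤ ε^2*(17*(x1^2+x2^2+a)) := by gcongr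
      linarith
    rcases hJ' with h | h | h | h | h
    · have := near (Or.inl (by rw [h]; simp [nsq]))
      linarith
    · have := near (Or.inr (by rw [h]; simp [nsq]))
      linarith
    · have := far ⟨_, h, by
        rw [hnl]
        linarith [sq_nonneg (x1 - d1 - (k 0 0:ℝ)/2), sq_nonneg (x2 - d2 - (k 0 1:ℝ)/2)]⟩
      linarith
    · have := far ⟨_, h, by
        rw [hnkl]
        linarith [sq_nonneg (x1 - d1 + (k 0 0:ℝ)/2), sq_nonneg (x2 - d2 + (k 0 1:ℝ)/2)]⟩
      linarith
    · have := far ⟨_, h, by rw [nsq2]; linarith⟩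
      linarith

def fl (u : ℝ × ℝ) : ZLat 2 := ![⌊u.1⌋, ⌊u.2⌋]

lemma fl_int (φ : ZLat 2 → ℝ) (S : Finset (ZLat 2)) (hS : ∀ l, l ∉ S → φ l = 0) :
    MeasureTheory.Integrable (fun u => φ (fl u)) ∧ ∫ u, φ (fl u) = ∑' l, φ l := by
  set cell : ZLat 2 → Set (ℝ × ℝ) := fun l =>
    Set.Ico (l 0:ℝ) (l 0+1) ×ˢ Set.Ico (l 1:ℝ) (l 1+1) with hcell
  have hmem : ∀ u l, u ∈ cell l ↔ fl u = l := by
    intro u l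
    simp only [hcell, Set.mem_prod, Set.mem_Ico, fl]
    rw [← Int.floor_eq_iff, ← Int.floor_eq_iff]
    constructor
    · rintro ⟨h1, h2⟩
      ext i
      fin_cases i <;> simp [h1, h2]
    · intro h
      rw [← h]; simp
  have hms : ∀ l, MeasurableSet (cell l) := fun l => measurableSet_Ico.prod measurableSet_Ico
  have hvol : ∀ l, MeasureTheory.volume (cell l) = 1 := by
    intro l
    rw [hcell, MeasureTheory.Measure.volume_eq_prod, MeasureTheory.Measure.prod_prod]
    simp
  have hrep : (fun u => φ (fl u)) = fun u => ∑ l ∈ S, (cell l).indicator (fun _ => φ l) u := by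
    ext u
    by_cases h : fl u ∈ S
    · rw [Finset.sum_eq_single_of_mem (fl u) h]
      · rw [Set.indicator_of_mem ((hmem u _).mpr rfl)]
      · intro b _ hb
        rw [Set.indicator_of_notMem]
        intro hu
        exact hb ((hmem u b).mp hu).symm
    · rw [hS _ h, Finset.sum_eq_zero]
      intro l hl
      rw [Set.indicator_of_notMem]
      intro hu
      rw [← (hmem u l).mp hu] at hl
      exact h hl
  have hi : ∀ l ∈ S, MeasureTheory.Integrable ((cell l).indicator (fun _ => φ l)) := by
    intro l _
    rw [MeasureTheory.integrable_indicator_iff (hms l)]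
    exact MeasureTheory.integrableOn_const (by rw [hvol]; simp) (by simp)
  refine ⟨by rw [hrep]; exact MeasureTheory.integrable_finsetSum _ hi, ?_⟩
  rw [hrep, MeasureTheory.integral_finsetSum _ hi, tsum_eq_sum hS]
  refine Finset.sum_congr rfl (fun l _ => ?_)
  rw [MeasureTheory.integral_indicator (hms l), MeasureTheory.setIntegral_const,
    MeasureTheory.measureReal_def, hvol]
  simp

lemma phi_supp (w : Fin 2 → ℝ) (ε : ℝ) (h0 : 0 < ε) {n : ℕ}
    (k : Fin (n+1) → ZLat 2) (hk : ∀ i, k i ≠ 0) :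
    ∃ S : Finset (ZLat 2), ∀ l, l ∉ S → phi w ε k l = 0 := by
  obtain ⟨M, hM⟩ := exists_nat_gt (1/ε)
  refine ⟨Finset.Icc (fun _ => -(M:ℤ)) (fun _ => (M:ℤ)), fun l hl => ?_⟩
  rcases Jind_cases ε h0 l (k 0) (hk 0) with ⟨hJ, j1, j2⟩ | ⟨hJ, hJ'⟩
  · exfalso
    apply hl
    have hM1 : 1 < M*ε := by rwa [div_lt_iff₀ h0] at hM
    have hb : ∀ i, |(l i:ℝ)| ≤ M := by
      intro i
      have : (l i:ℝ)^2 ≤ nsq l := by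
        rw [nsq2]; fin_cases i <;> simp <;> positivity
      have h3 : (ε*|(l i:ℝ)|)^2 ≤ 1 := by
        rw [mul_pow, sq_abs]
        refine le_trans ?_ j1
        gcongr
      have h4 : ε*|(l i:ℝ)| ≤ 1 := by rwa [sq_le_one_iff₀ (by positivity)] at h3
      by_contra hh
      push Not at hh
      nlinarith
    rw [Finset.mem_Icc]
    constructor
    · intro i
      have := (abs_le.mp (hb i)).1
      exact_mod_cast this
    · intro i
      have := (abs_le.mp (hb i)).2
      exact_mod_cast this
  · rw [phi, hJ, zero_div]

/-- There is a constant `C > 0`, independent of `ε`, `n` (and `k`),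
such that for every `ε ∈ (0,1/2)`, `n ≥ 1` and every `k_{1:n} ∈ (ℤ²₀)^n` (chaos level
`n+1 ≥ 1` here), `|P^ε(k_{1:n}) − G(L^ε(|k_{1:n}|²/2))| ≤ C λ_ε²`. -/
theorem stmt3 (w : Fin 2 → ℝ) (hw : w ≠ 0) :
    ∃ C : ℝ, 0 < C ∧
      ∀ ε : ℝ, 0 < ε → ε < 1/2 →
      ∀ (n : ℕ) (k : Fin (n+1) → ZLat 2), (∀ a, k a ≠ 0) →
        |Peps w ε k - Gfun (wnSq w) (Leps ε (wSq k / 2))| ≤ C * (lam 2 ε)^2 := by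
  have hc := wnSq_pos w hw
  have hp := Real.pi_pos
  refine ⟨(1/Real.pi^2) * (18*(12+245*wnSq w)*(2*Real.pi) + 18*Real.pi), by positivity, ?_⟩
  intro ε h0 hε n k hk
  have hl := lamsq_pos ε h0 hε
  obtain ⟨S, hS⟩ := phi_supp w ε h0 k hk
  obtain ⟨i1, i2⟩ := fl_int (phi w ε k) S hS
  have ha : 0 < wSq k / 2 := by
    have h1 : nsq (k 0) ≤ wSq k := by
      rw [wSq]
      exact Finset.single_le_sum (f := fun i => nsq (k i)) (fun i _ => nsq_nonneg _)
        (Finset.mem_univ 0)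
    have := nsq_ge _ (hk 0)
    linarith
  set a := wSq k / 2 with hadef
  set κ : ℝ × ℝ := ((k 0 0:ℝ)/2, (k 0 1:ℝ)/2) with hκ
  have hHi := (Hf_integrable w hw ε a h0 hε ha).comp_sub_right κ
  have hHI := MeasureTheory.integral_sub_right_eq_self (μ := MeasureTheory.volume) (Hf w ε a) κ
  rw [Hf_int w hw ε a h0 hε ha] at hHI
  set E : ℝ × ℝ → ℝ := fun p =>
    18*(12+245*wnSq w) * (Real.sqrt a/((p.1^2+p.2^2+a)*Real.sqrt (p.1^2+p.2^2+a)))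
       + 18*(ε^2/(1+ε^2*(p.1^2+p.2^2))^2) with hE
  have e1i := (E1_integrable a ha).const_mul (18*(12+245*wnSq w))
  have e2i := (E2_integrable ε h0).const_mul 18
  have hEi : MeasureTheory.Integrable E := e1i.add e2i
  have hEI : ∫ p, E p = 18*(12+245*wnSq w)*(2*Real.pi) + 18*Real.pi := by
    rw [hE, MeasureTheory.integral_add e1i e2i, MeasureTheory.integral_const_mul,
      MeasureTheory.integral_const_mul, E1_int a ha, E2_int ε h0]
  have hEi' := hEi.comp_sub_right κ
  have hEI' := MeasureTheory.integral_sub_right_eq_self (μ := MeasureTheory.volume) E κ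
  have hpt : ∀ u : ℝ × ℝ, ‖phi w ε k (fl u) - Hf w ε a (u - κ)‖ ≤ E (u - κ) := by
    intro u
    have := pointwise w hw ε h0 hε k hk (fl u) (u.1 - (k 0 0:ℝ)/2) (u.2 - (k 0 1:ℝ)/2)
      (Int.fract u.1) (Int.fract u.2) a (Int.fract_nonneg _) (Int.fract_lt_one _).le
      (Int.fract_nonneg _) (Int.fract_lt_one _).le
      (by simp only [fl, Matrix.cons_val_zero]; linarith [Int.floor_add_fract u.1])
      (by simp only [fl, Matrix.cons_val_one, Matrix.cons_val_fin_one]; linarith [Int.floor_add_fract u.2]) hadef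
    exact this
  have hbd := MeasureTheory.norm_integral_le_of_norm_le hEi' (Filter.Eventually.of_forall hpt)
  rw [MeasureTheory.integral_sub i1 hHi, i2, hHI, hEI', hEI, Real.norm_eq_abs] at hbd
  have hP : Peps w ε k = (lam 2 ε)^2/Real.pi^2 * ∑' l, phi w ε k l := rfl
  have hl' : lam 2 ε ≠ 0 := by intro h; rw [h] at hl; norm_num at hl
  have : Peps w ε k - Gfun (wnSq w) (Leps ε a) = (lam 2 ε)^2/Real.pi^2 *
      (∑' l, phi w ε k l - Real.pi^2 / (lam 2 ε)^2 * Gfun (wnSq w) (Leps ε a)) := by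
    rw [hP]; field_simp
  rw [this, abs_mul, abs_of_nonneg (by positivity)]
  calc _ ≤ (lam 2 ε)^2/Real.pi^2 * (18*(12+245*wnSq w)*(2*Real.pi) + 18*Real.pi) := by gcongr
    _ = _ := by ring

end SBE
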